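/- Let η₀ ∈ C²(ℝ^d) with ∇η₀ ∈ L^∞ and ε₀ := ‖⟨x⟩∇²η₀‖_{L^∞} sufficiently small (depending on ‖∇η₀‖_{L^∞}). Let H(x,ξ) = (|ξ|² − (∇η₀(x)·ξ)²/(1+|∇η₀(x)|²))^{3/4} and let (x_s,ξ_s) be a Hamiltonian trajectory of H with ξ₀ ≠ 0. Then there exists c > 0 with d/ds (x_s · ξ_s) ≥ c|ξ₀|^{3/2} for all s; consequently x_s · ξ_s → +∞ as s → +∞ and the trajectory is non-trapping (leaves every compact set). -/

import Mathlib

/- STATEMENT 12: If ∇η₀ ∈ L^∞ and ε₀ = ‖⟨x⟩∇²η₀‖_{L^∞} is small enough (depending on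
‖∇η₀‖_{L^∞}), then along any Hamiltonian trajectory of H = G^{3/4} with ξ₀ ≠ 0 one has
d/ds(x_s·ξ_s) ≥ c|ξ₀|^{3/2}; hence x_s·ξ_s → +∞ and the trajectory leaves every
compact set (non-trapping). -/

open Filter
open scoped RealInnerProductSpace Topology

noncomputable section

variable (d : ℕ)

abbrev Ed := EuclideanSpace ℝ (Fin d)

/-- `G(x,ξ) = |ξ|² − (∇η₀(x)·ξ)²/(1+|∇η₀(x)|²)`. -/
def Gsymb (η₀ : Ed d → ℝ) (x ξ : Ed d) : ℝ :=
  ‖ξ‖ ^ 2 - (⟪gradient η₀ x, ξ⟫ : ℝ) ^ 2 / (1 + ‖gradient η₀ x‖ ^ 2)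

/-- `H = G^{3/4}`. -/
def Hsymb (η₀ : Ed d → ℝ) (x ξ : Ed d) : ℝ :=
  (Gsymb d η₀ x ξ) ^ ((3 : ℝ) / 4)

/- Let `p = ∇η₀(x)` and let `v = (1 + p ⊗ p)⁻¹ ξ = ξ - ((p·ξ)/(1+|p|²)) p` be the vector dual to
`ξ` in the metric of the graph of `η₀`. Then `G = |v|² + (p·v)²`, and the derivative of `G` in `p`
along `w` is `-2 (p·v)(w·v)`, at most `|w| G` in absolute value by AM-GM. Taking `w = ∇²η₀(x) x`
and using Euler's identity for `H = G^a`, which is `2a`-homogeneous in `ξ`, we get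
`d/ds (x·ξ) ≥ a (2 - |∇²η₀(x) x|) H`, and `H` is conserved. So `x·ξ → +∞`; on a compact set,
however, conservation of `G ≥ |ξ|²/(1+|p|²)` bounds `ξ`, and with it `x·ξ`. -/

section Calculus

variable {E F : Type*} [NormedAddCommGroup E] [NormedSpace ℝ E]
  [NormedAddCommGroup F] [NormedSpace ℝ F]

theorem fderiv_apply_self_of_homogeneous {f : E → F} {k : ℝ} {x : E}
    (hf : DifferentiableAt ℝ f x) (hom : ∀ t : ℝ, 0 < t → f (t • x) = t ^ k • f x) :
    fderiv ℝ f x x = k • f x := by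
  have along_ray : HasDerivAt (fun t : ℝ ↦ f (t • x)) (fderiv ℝ f x x) 1 :=
    hf.hasFDerivAt.comp_hasDerivAt_of_eq 1
      (by simpa using (hasDerivAt_id (1 : ℝ)).smul_const x) (one_smul ℝ x).symm
  have of_power : HasDerivAt (fun t : ℝ ↦ t ^ k • f x) (k • f x) 1 := by
    simpa using (Real.hasDerivAt_rpow_const (p := k) (Or.inl one_ne_zero)).smul_const (f x)
  exact along_ray.unique <| of_power.congr_of_eventuallyEq <|
    (lt_mem_nhds one_pos).mono hom

theorem fderiv_uncurry_apply {G : Type*} [NormedAddCommGroup G] [NormedSpace ℝ G] {f : E → F → G}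
    {x v : E} {y w : F} (hf : DifferentiableAt ℝ (Function.uncurry f) (x, y)) :
    fderiv ℝ (Function.uncurry f) (x, y) (v, w) =
      fderiv ℝ (fun x ↦ f x y) x v + fderiv ℝ (f x) y w := by
  have left : HasFDerivAt (fun x ↦ f x y) _ x :=
    hf.hasFDerivAt.comp (f := fun x ↦ (x, y)) x (hasFDerivAt_prodMk_left x y)
  have right : HasFDerivAt (f x) _ y :=
    hf.hasFDerivAt.comp (f := fun y ↦ (x, y)) y (hasFDerivAt_prodMk_right x y)
  rw [left.fderiv, right.fderiv, ContinuousLinearMap.comp_apply, ContinuousLinearMap.comp_apply,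
    ← map_add]
  simp

theorem tendsto_atTop_of_forall_le_deriv {f : ℝ → ℝ} {c : ℝ} (hf : Differentiable ℝ f)
    (hc : 0 < c) (hf' : ∀ s, c ≤ deriv f s) : Tendsto f atTop atTop := by
  have linear : Tendsto (fun s ↦ f 0 + c * s) atTop atTop :=
    tendsto_atTop_add_const_left _ _ (tendsto_id.const_mul_atTop hc)
  refine tendsto_atTop_mono' _ ?_ linear
  filter_upwards [eventually_ge_atTop 0] with s hs
  have := mul_sub_le_image_sub_of_le_deriv hf hf' hs
  linarith

theorem eventually_notMem_of_tendsto_atTop {ι X : Type*} [TopologicalSpace X] {l : Filter ι}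
    {u : ι → X} {f : X → ℝ} {K : Set X} (hK : IsCompact K) (hf : ContinuousOn f K)
    (h : Tendsto (fun i ↦ f (u i)) l atTop) : ∀ᶠ i in l, u i ∉ K := by
  obtain ⟨C, hC⟩ := hK.bddAbove_image hf
  filter_upwards [h.eventually_gt_atTop C] with i hi hmem
  exact hi.not_ge (hC (Set.mem_image_of_mem f hmem))

end Calculus

section Gradient

variable {E : Type*} [NormedAddCommGroup E] [InnerProductSpace ℝ E] [CompleteSpace E]
  {f : E → ℝ}

theorem differentiable_gradient (hf : ContDiff ℝ 2 f) : Differentiable ℝ (gradient f) :=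
  (InnerProductSpace.toDual ℝ E).symm.toContinuousLinearEquiv.comp_differentiable_iff.2 <|
    (hf.fderiv_right (m := 1) (by norm_num)).differentiable one_ne_zero

theorem norm_fderiv_gradient (x : E) :
    ‖fderiv ℝ (gradient f) x‖ = ‖iteratedFDeriv ℝ 2 f x‖ := by
  let J : StrongDual ℝ E ≃ₗᵢ[ℝ] E := (InnerProductSpace.toDual ℝ E).symm
  calc ‖fderiv ℝ (J ∘ fderiv ℝ f) x‖
      = ‖fderiv ℝ (fderiv ℝ f) x‖ := by
        rw [J.comp_fderiv]
        exact J.toLinearIsometry.norm_toContinuousLinearMap_comp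
    _ = ‖iteratedFDeriv ℝ 2 f x‖ := by rw [← norm_iteratedFDeriv_one, norm_iteratedFDeriv_fderiv]

theorem norm_fderiv_gradient_apply_self_le (x : E) :
    ‖fderiv ℝ (gradient f) x x‖ ≤
      (1 + ‖x‖ ^ 2) ^ ((1 : ℝ) / 2) * ‖iteratedFDeriv ℝ 2 f x‖ := by
  have norm_le : ‖x‖ ≤ (1 + ‖x‖ ^ 2) ^ ((1 : ℝ) / 2) := by
    rw [← Real.sqrt_eq_rpow]
    exact Real.le_sqrt_of_sq_le (by linarith)
  calc ‖fderiv ℝ (gradient f) x x‖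
      ≤ ‖fderiv ℝ (gradient f) x‖ * ‖x‖ := ContinuousLinearMap.le_opNorm _ _
    _ ≤ (1 + ‖x‖ ^ 2) ^ ((1 : ℝ) / 2) * ‖iteratedFDeriv ℝ 2 f x‖ := by
        rw [norm_fderiv_gradient, mul_comm]
        gcongr

end Gradient

section HamiltonianTrajectory

variable {E : Type*} [NormedAddCommGroup E] [InnerProductSpace ℝ E] [CompleteSpace E]

/-- A global solution `(x, ξ)` of Hamilton's equations `x' = ∂_ξ H`, `ξ' = -∂_x H`. The partial
gradients are `0` where they do not exist, so the notion is meaningful for differentiable `H`. -/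
structure IsHamiltonianTrajectory (H : E → E → ℝ) (x ξ : ℝ → E) : Prop where
  hasDerivAt_position : ∀ s, HasDerivAt x (gradient (H (x s)) (ξ s)) s
  hasDerivAt_momentum : ∀ s, HasDerivAt ξ (-gradient (fun y ↦ H y (ξ s)) (x s)) s

namespace IsHamiltonianTrajectory

variable {H : E → E → ℝ} {x ξ : ℝ → E}

theorem hasDerivAt_inner (h : IsHamiltonianTrajectory H x ξ) (s : ℝ) :
    HasDerivAt (fun s ↦ (⟪x s, ξ s⟫ : ℝ))
      (fderiv ℝ (H (x s)) (ξ s) (ξ s) - fderiv ℝ (fun y ↦ H y (ξ s)) (x s) (x s)) s := by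
  refine ((h.hasDerivAt_position s).inner ℝ (h.hasDerivAt_momentum s)).congr_deriv ?_
  rw [inner_neg_right, inner_gradient_left, real_inner_comm, inner_gradient_left]
  ring

theorem conserved (h : IsHamiltonianTrajectory H x ξ)
    (hH : Differentiable ℝ (Function.uncurry H)) (s t : ℝ) : H (x s) (ξ s) = H (x t) (ξ t) := by
  have stationary (s : ℝ) : HasDerivAt (fun s ↦ H (x s) (ξ s)) 0 s := by
    have total := (hH (x s, ξ s)).hasFDerivAt
    refine (total.comp_hasDerivAt s
      ((h.hasDerivAt_position s).prodMk (h.hasDerivAt_momentum s))).congr_deriv ?_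
    rw [fderiv_uncurry_apply (hH (x s, ξ s)), ← inner_gradient_left, ← inner_gradient_left,
      inner_neg_right, real_inner_comm, add_neg_cancel]
  exact is_const_of_deriv_eq_zero (fun s ↦ (stationary s).differentiableAt)
    (fun s ↦ (stationary s).deriv) s t

end IsHamiltonianTrajectory

end HamiltonianTrajectory

section GraphCometric

variable {E : Type*} [NormedAddCommGroup E] [InnerProductSpace ℝ E]

/-- The squared length of a covector `ξ` in the metric `1 + p ⊗ p` which a graph of slope `p`
inherits from the ambient space. The symbol `G(x, ξ)` is its value at `p = ∇η₀(x)`. -/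
def graphCometric (p ξ : E) : ℝ :=
  ‖ξ‖ ^ 2 - (⟪p, ξ⟫ : ℝ) ^ 2 / (1 + ‖p‖ ^ 2)

/-- The vector dual to the covector `ξ` in the metric `1 + p ⊗ p` of a graph of slope `p`, that
is, `(1 + p ⊗ p)⁻¹ ξ`. -/
def graphSharp (p ξ : E) : E :=
  ξ - ((⟪p, ξ⟫ : ℝ) / (1 + ‖p‖ ^ 2)) • p

/-- The tangent vector `(v, p·v)` of a graph of slope `p`, where `v = graphSharp p ξ`. Its length
is the square root of `graphCometric p ξ`, but it depends differentiably on `(p, ξ)` also at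
`ξ = 0`. -/
def graphTangent (p ξ : E) : WithLp 2 (E × ℝ) :=
  WithLp.toLp 2 (graphSharp p ξ, (⟪p, graphSharp p ξ⟫ : ℝ))

theorem inner_graphSharp (p ξ : E) :
    (⟪p, graphSharp p ξ⟫ : ℝ) = ⟪p, ξ⟫ / (1 + ‖p‖ ^ 2) := by
  rw [graphSharp, inner_sub_right, inner_smul_right, real_inner_self_eq_norm_sq]
  field_simp
  ring

theorem graphCometric_eq (p ξ : E) :
    graphCometric p ξ = ‖graphSharp p ξ‖ ^ 2 + (⟪p, graphSharp p ξ⟫ : ℝ) ^ 2 := by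
  rw [inner_graphSharp, graphSharp, norm_sub_sq_real, norm_smul, inner_smul_right,
    real_inner_comm p ξ, mul_pow, Real.norm_eq_abs, sq_abs, graphCometric]
  field_simp
  ring

theorem norm_sq_graphTangent (p ξ : E) : ‖graphTangent p ξ‖ ^ 2 = graphCometric p ξ := by
  simp [graphTangent, WithLp.prod_norm_sq_eq_of_L2, graphCometric_eq]

theorem graphCometric_nonneg (p ξ : E) : 0 ≤ graphCometric p ξ :=
  norm_sq_graphTangent p ξ ▸ sq_nonneg _

theorem norm_sq_le_graphCometric (p ξ : E) :
    ‖ξ‖ ^ 2 ≤ (1 + ‖p‖ ^ 2) * graphCometric p ξ := by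
  have cauchy_schwarz : (⟪p, ξ⟫ : ℝ) ^ 2 ≤ ‖p‖ ^ 2 * ‖ξ‖ ^ 2 := by
    rw [← mul_pow, ← sq_abs]
    gcongr
    exact abs_real_inner_le_norm p ξ
  have clear_denominator :
      (1 + ‖p‖ ^ 2) * graphCometric p ξ = (1 + ‖p‖ ^ 2) * ‖ξ‖ ^ 2 - (⟪p, ξ⟫ : ℝ) ^ 2 := by
    rw [graphCometric]
    field_simp
  linarith

theorem graphCometric_pos (p : E) {ξ : E} (hξ : ξ ≠ 0) : 0 < graphCometric p ξ :=
  pos_of_mul_pos_right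
    ((pow_pos (norm_pos_iff.2 hξ) 2).trans_le (norm_sq_le_graphCometric p ξ)) (by positivity)

theorem graphCometric_smul (t : ℝ) (p ξ : E) :
    graphCometric p (t • ξ) = t ^ 2 * graphCometric p ξ := by
  rw [graphCometric, graphCometric, norm_smul, inner_smul_right, mul_pow, Real.norm_eq_abs, sq_abs]
  ring

theorem differentiable_graphTangent :
    Differentiable ℝ (fun z : E × E ↦ graphTangent z.1 z.2) := by
  have slope : Differentiable ℝ (fun z : E × E ↦ z.1) := differentiable_fst
  have sharp : Differentiable ℝ (fun z : E × E ↦ graphSharp z.1 z.2) := by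
    have denominator (z : E × E) : 1 + ‖z.1‖ ^ 2 ≠ 0 := by positivity
    have coefficient : Differentiable ℝ fun z : E × E ↦ (⟪z.1, z.2⟫ : ℝ) / (1 + ‖z.1‖ ^ 2) :=
      (slope.inner ℝ differentiable_snd).fun_mul
        (((slope.norm_sq ℝ).const_add 1).inv denominator)
    exact differentiable_snd.sub (coefficient.smul slope)
  exact (WithLp.prodContinuousLinearEquiv 2 ℝ E ℝ).symm.differentiable.comp
    (sharp.prodMk (slope.inner ℝ sharp))

theorem hasFDerivAt_graphCometric_left (p ξ : E) :
    HasFDerivAt (fun p ↦ graphCometric p ξ)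
      (-(2 * (⟪p, graphSharp p ξ⟫ : ℝ)) • innerSL ℝ (graphSharp p ξ)) p := by
  have pairing : HasFDerivAt (fun p ↦ (⟪p, ξ⟫ : ℝ)) (innerSL ℝ ξ) p :=
    (innerSL ℝ ξ).hasFDerivAt.congr_of_eventuallyEq
      (Eventually.of_forall fun q ↦ real_inner_comm ξ q)
  have inverse := (hasDerivAt_inv (by positivity : 1 + ‖p‖ ^ 2 ≠ 0)).comp_hasFDerivAt p
    ((hasStrictFDerivAt_norm_sq p).hasFDerivAt.const_add (1 : ℝ))
  refine (((pairing.pow 2).mul inverse).const_sub (‖ξ‖ ^ 2)).congr_fderiv ?_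
  ext w
  have inner_graphSharp_left :
      (⟪graphSharp p ξ, w⟫ : ℝ) = ⟪ξ, w⟫ - (⟪p, ξ⟫ : ℝ) / (1 + ‖p‖ ^ 2) * ⟪p, w⟫ := by
    rw [graphSharp, inner_sub_left, real_inner_smul_left]
  suffices -((1 + ‖p‖ ^ 2)⁻¹ * (2 * (⟪p, ξ⟫ : ℝ) * ⟪ξ, w⟫)) +
      (⟪p, ξ⟫ : ℝ) ^ 2 * (((1 + ‖p‖ ^ 2) ^ 2)⁻¹ * (2 * ⟪p, w⟫)) =
        -(2 * (⟪p, graphSharp p ξ⟫ : ℝ) * ⟪graphSharp p ξ, w⟫) by simpa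
  rw [inner_graphSharp, inner_graphSharp_left]
  field_simp
  ring

/- AM-GM: `2 |p·v| |v| ≤ |v|² + (p·v)²`. -/
theorem norm_fderiv_graphCometric_left_le (p ξ : E) :
    ‖fderiv ℝ (fun p ↦ graphCometric p ξ) p‖ ≤ graphCometric p ξ := by
  rw [(hasFDerivAt_graphCometric_left p ξ).fderiv, norm_smul, innerSL_apply_norm, norm_neg,
    norm_mul, Real.norm_two, Real.norm_eq_abs, graphCometric_eq, ← sq_abs (⟪p, _⟫ : ℝ)]
  linarith [two_mul_le_add_sq |(⟪p, graphSharp p ξ⟫ : ℝ)| ‖graphSharp p ξ‖]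

end GraphCometric

section GraphHamiltonian

variable {E : Type*} [NormedAddCommGroup E] [InnerProductSpace ℝ E] {a : ℝ} {p : E → E}

/-- The Hamiltonian `G(x, ξ) ^ a` of a field of slopes `p`. The case `a = 3 / 4` and `p = ∇η₀` is
the symbol `H`. -/
def graphHamiltonian (a : ℝ) (p : E → E) (x ξ : E) : ℝ :=
  graphCometric (p x) ξ ^ a

theorem graphHamiltonian_eq_norm_rpow (a : ℝ) (p : E → E) (x ξ : E) :
    graphHamiltonian a p x ξ = ‖graphTangent (p x) ξ‖ ^ (2 * a) := by
  rw [graphHamiltonian, ← norm_sq_graphTangent, ← Real.rpow_natCast_mul (norm_nonneg _),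
    Nat.cast_two]

theorem graphHamiltonian_zero_right (ha : a ≠ 0) (p : E → E) (x : E) :
    graphHamiltonian a p x 0 = 0 := by
  simp [graphHamiltonian, graphCometric, ha]

theorem graphHamiltonian_nonneg (a : ℝ) (p : E → E) (x ξ : E) : 0 ≤ graphHamiltonian a p x ξ :=
  Real.rpow_nonneg (graphCometric_nonneg _ _) a

theorem norm_rpow_le_graphHamiltonian (ha : 0 ≤ a) (p : E → E) (x ξ : E) :
    ‖ξ‖ ^ (2 * a) ≤ (1 + ‖p x‖ ^ 2) ^ a * graphHamiltonian a p x ξ := by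
  calc ‖ξ‖ ^ (2 * a) = (‖ξ‖ ^ 2) ^ a := by
        rw [← Real.rpow_natCast_mul (norm_nonneg _), Nat.cast_two]
    _ ≤ ((1 + ‖p x‖ ^ 2) * graphCometric (p x) ξ) ^ a := by
        gcongr
        exact norm_sq_le_graphCometric (p x) ξ
    _ = (1 + ‖p x‖ ^ 2) ^ a * graphHamiltonian a p x ξ :=
        Real.mul_rpow (by positivity) (graphCometric_nonneg _ _)

theorem norm_le_sqrt_graphHamiltonian (ha : a ≠ 0) (p : E → E) (x ξ : E) :
    ‖ξ‖ ≤ √((1 + ‖p x‖ ^ 2) * graphHamiltonian a p x ξ ^ a⁻¹) := by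
  rw [graphHamiltonian, Real.rpow_rpow_inv (graphCometric_nonneg _ _) ha]
  exact Real.le_sqrt_of_sq_le (norm_sq_le_graphCometric (p x) ξ)

theorem differentiable_uncurry_graphHamiltonian (ha : 1 / 2 < a) (hp : Differentiable ℝ p) :
    Differentiable ℝ (Function.uncurry (graphHamiltonian a p)) := by
  have tangent : Differentiable ℝ (fun z : E × E ↦ graphTangent (p z.1) z.2) :=
    differentiable_graphTangent.comp (f := fun z : E × E ↦ (p z.1, z.2))
      ((hp.comp differentiable_fst).prodMk differentiable_snd)
  have : Function.uncurry (graphHamiltonian a p) = fun z ↦ ‖graphTangent (p z.1) z.2‖ ^ (2 * a) :=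
    funext fun z ↦ graphHamiltonian_eq_norm_rpow a p z.1 z.2
  exact this ▸ tangent.norm_rpow (by linarith)

theorem fderiv_graphHamiltonian_apply_self (ha : 1 / 2 < a) (p : E → E) (x ξ : E) :
    fderiv ℝ (graphHamiltonian a p x) ξ ξ = 2 * a * graphHamiltonian a p x ξ := by
  have smooth : Differentiable ℝ (graphHamiltonian a p x) :=
    (differentiable_uncurry_graphHamiltonian ha (differentiable_const (p x))).comp
      ((differentiable_const x).prodMk differentiable_id)
  refine fderiv_apply_self_of_homogeneous (smooth ξ) fun t ht ↦ ?_
  rw [graphHamiltonian, graphCometric_smul, Real.mul_rpow (by positivity)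
    (graphCometric_nonneg _ _), ← Real.rpow_natCast_mul ht.le, Nat.cast_two]
  rfl

theorem fderiv_graphHamiltonian_left_apply_le (ha : 0 < a) {x : E}
    (hp : DifferentiableAt ℝ p x) (ξ v : E) :
    fderiv ℝ (fun y ↦ graphHamiltonian a p y ξ) x v ≤
      a * ‖fderiv ℝ p x v‖ * graphHamiltonian a p x ξ := by
  rcases eq_or_ne ξ 0 with rfl | hξ
  · simp [graphHamiltonian_zero_right ha.ne']
  have pos := graphCometric_pos (p x) hξ
  have cometric := (hasFDerivAt_graphCometric_left (p x) ξ).differentiableAt.hasFDerivAt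
  have chain : HasFDerivAt (fun y ↦ graphHamiltonian a p y ξ) _ x :=
    (cometric.comp x hp.hasFDerivAt).rpow_const (p := a) (Or.inl pos.ne')
  rw [chain.fderiv]
  set L := fderiv ℝ (fun q ↦ graphCometric q ξ) (p x)
  set w := fderiv ℝ p x v
  have bound : L w ≤ graphCometric (p x) ξ * ‖w‖ :=
    (le_abs_self _).trans (L.le_of_opNorm_le (norm_fderiv_graphCometric_left_le (p x) ξ) w)
  calc a * graphCometric (p x) ξ ^ (a - 1) * L w
      ≤ a * graphCometric (p x) ξ ^ (a - 1) * (graphCometric (p x) ξ * ‖w‖) := by gcongr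
    _ = a * ‖w‖ * graphHamiltonian a p x ξ := by
        rw [graphHamiltonian, Real.rpow_sub_one pos.ne']
        field_simp

end GraphHamiltonian

section Escape

variable {E : Type*} [NormedAddCommGroup E] [InnerProductSpace ℝ E] [CompleteSpace E]
  {a κ : ℝ} {p : E → E} {x ξ : ℝ → E}

theorem IsHamiltonianTrajectory.le_deriv_inner
    (h : IsHamiltonianTrajectory (graphHamiltonian a p) x ξ) (ha : 1 / 2 < a) (hκ : κ ≤ 2)
    (hp : Differentiable ℝ p) (hDp : ∀ y, ‖fderiv ℝ p y y‖ ≤ κ) (s : ℝ) :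
    a * (2 - κ) / (1 + ‖p (x 0)‖ ^ 2) ^ a * ‖ξ 0‖ ^ (2 * a) ≤
      deriv (fun s ↦ (⟪x s, ξ s⟫ : ℝ)) s := by
  have ha0 : 0 < a := by linarith
  have conserved := h.conserved (differentiable_uncurry_graphHamiltonian ha hp) s 0
  have H_nonneg := graphHamiltonian_nonneg a p (x s) (ξ s)
  calc a * (2 - κ) / (1 + ‖p (x 0)‖ ^ 2) ^ a * ‖ξ 0‖ ^ (2 * a)
      ≤ a * (2 - κ) * graphHamiltonian a p (x 0) (ξ 0) := by
        rw [div_mul_eq_mul_div, mul_div_assoc]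
        have : 0 ≤ 2 - κ := sub_nonneg.2 hκ
        gcongr
        rw [div_le_iff₀' (by positivity)]
        exact norm_rpow_le_graphHamiltonian ha0.le p (x 0) (ξ 0)
    _ = 2 * a * graphHamiltonian a p (x s) (ξ s) - a * κ * graphHamiltonian a p (x s) (ξ s) := by
        rw [conserved]
        ring
    _ ≤ 2 * a * graphHamiltonian a p (x s) (ξ s) -
          a * ‖fderiv ℝ p (x s) (x s)‖ * graphHamiltonian a p (x s) (ξ s) := by
        gcongr
        exact hDp (x s)
    _ ≤ fderiv ℝ (graphHamiltonian a p (x s)) (ξ s) (ξ s) -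
          fderiv ℝ (fun y ↦ graphHamiltonian a p y (ξ s)) (x s) (x s) := by
        rw [fderiv_graphHamiltonian_apply_self ha]
        gcongr
        exact fderiv_graphHamiltonian_left_apply_le ha0 (hp (x s)) (ξ s) (x s)
    _ = deriv (fun s ↦ (⟪x s, ξ s⟫ : ℝ)) s := (h.hasDerivAt_inner s).deriv.symm

theorem IsHamiltonianTrajectory.eventually_notMem
    (h : IsHamiltonianTrajectory (graphHamiltonian a p) x ξ) (ha : 1 / 2 < a)
    (hp : Differentiable ℝ p)
    (hinner : Tendsto (fun s ↦ (⟪x s, ξ s⟫ : ℝ)) atTop atTop) {K : Set E} (hK : IsCompact K) :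
    ∀ᶠ s in atTop, x s ∉ K := by
  set H₀ := graphHamiltonian a p (x 0) (ξ 0)
  have barrier : Continuous fun y ↦ ‖y‖ * √((1 + ‖p y‖ ^ 2) * H₀ ^ a⁻¹) := by
    have := hp.continuous
    fun_prop
  refine eventually_notMem_of_tendsto_atTop hK barrier.continuousOn
    (tendsto_atTop_mono (fun s ↦ ?_) hinner)
  have momentum_le := norm_le_sqrt_graphHamiltonian (a := a) (by linarith) p (x s) (ξ s)
  rw [h.conserved (differentiable_uncurry_graphHamiltonian ha hp) s 0] at momentum_le
  exact (real_inner_le_norm _ _).trans (by gcongr)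

theorem nontrapping_of_small_weighted_hessian_general (ha : 1 / 2 < a) (hκ : κ < 2)
    (hp : Differentiable ℝ p) (hDp : ∀ y, ‖fderiv ℝ p y y‖ ≤ κ)
    (h : IsHamiltonianTrajectory (graphHamiltonian a p) x ξ) (hξ : ξ 0 ≠ 0) :
    ∃ c : ℝ, 0 < c ∧
      (∀ s : ℝ, ∃ D : ℝ,
        HasDerivAt (fun s' ↦ (⟪x s', ξ s'⟫ : ℝ)) D s ∧ c * ‖ξ 0‖ ^ (2 * a) ≤ D) ∧
      Tendsto (fun s ↦ (⟪x s, ξ s⟫ : ℝ)) atTop atTop ∧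
      ∀ K : Set E, IsCompact K → ∀ᶠ s in atTop, x s ∉ K := by
  have : 0 < a := by linarith
  have : 0 < 2 - κ := sub_pos.2 hκ
  have differentiable : Differentiable ℝ (fun s ↦ (⟪x s, ξ s⟫ : ℝ)) :=
    fun s ↦ (h.hasDerivAt_inner s).differentiableAt
  have growth := h.le_deriv_inner ha hκ.le hp hDp
  have tendsto := tendsto_atTop_of_forall_le_deriv differentiable (by positivity) growth
  exact ⟨_, by positivity, fun s ↦ ⟨_, (differentiable s).hasDerivAt, growth s⟩, tendsto,
    fun K ↦ h.eventually_notMem ha hp tendsto⟩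

end Escape

theorem nontrapping_of_small_weighted_hessian (M : ℝ) (hM : 0 ≤ M) :
    ∃ ε₀ : ℝ, 0 < ε₀ ∧
      ∀ (η₀ : Ed d → ℝ), ContDiff ℝ 2 η₀ →
        (∀ x, ‖gradient η₀ x‖ ≤ M) →
        (∀ x : Ed d, (1 + ‖x‖ ^ 2) ^ ((1 : ℝ) / 2) * ‖iteratedFDeriv ℝ 2 η₀ x‖ ≤ ε₀) →
        ∀ x ξ : ℝ → Ed d,
          (∀ s, HasDerivAt x (gradient (fun ξ' => Hsymb d η₀ (x s) ξ') (ξ s)) s) →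
          (∀ s, HasDerivAt ξ (-(gradient (fun x' => Hsymb d η₀ x' (ξ s)) (x s))) s) →
          ξ 0 ≠ 0 →
          ∃ c : ℝ, 0 < c ∧
            (∀ s : ℝ, ∃ D : ℝ,
              HasDerivAt (fun s' => (⟪x s', ξ s'⟫ : ℝ)) D s ∧
              c * ‖ξ 0‖ ^ ((3 : ℝ) / 2) ≤ D) ∧
            Tendsto (fun s => (⟪x s, ξ s⟫ : ℝ)) atTop atTop ∧
            ∀ K : Set (Ed d), IsCompact K → ∀ᶠ s in atTop, x s ∉ K :=
  ⟨1, one_pos, fun η₀ hη _ hhess x ξ hx hξ hξ0 ↦ by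
    have h : IsHamiltonianTrajectory (graphHamiltonian (3 / 4) (gradient η₀)) x ξ := ⟨hx, hξ⟩
    convert nontrapping_of_small_weighted_hessian_general (by norm_num) one_lt_two
      (differentiable_gradient hη)
      (fun y ↦ (norm_fderiv_gradient_apply_self_le y).trans (hhess y)) h hξ0 using 9
    norm_num⟩
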